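/- (Whitney extension, Lip(1+γ) case.) Let Ω be a closed subset of ℝ^n, γ ∈ (0,1], and let f : Ω → ℝ^{d′} and G : Ω → L(ℝ^n, ℝ^{d′}) satisfy, for a constant H: ‖f(u)‖ ≤ H and ‖G(u)‖ ≤ H for all u ∈ Ω, ‖G(u) − G(u′)‖ ≤ H ‖u − u′‖^γ for all u, u′ ∈ Ω, and ‖f(u) − f(u′) − G(u′)(u − u′)‖ ≤ H ‖u − u′‖^{1+γ} for all u, u′ ∈ Ω. Then there exists a differentiable function F : ℝ^n → ℝ^{d′} such that F = f and DF = G on Ω, and such that ‖F‖_∞ ≤ cH, ‖DF‖_∞ ≤ cH, and DF is γ-Hölder on ℝ^n with constant cH, where c depends only on γ and n. -/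

import Mathlib

noncomputable section

/-- `E n` is the Euclidean space `ℝ^n`. -/
abbrev E (n : ℕ) : Type := EuclideanSpace ℝ (Fin n)

/-!
On the complement of `Ω` take a partition of unity whose members live at the scale of the distance
to `Ω`, and average with these weights the Taylor polynomials of the jet `(f, G)` at nearest points
of `Ω`. At a point `x₀` at distance `δ` from `Ω`, with nearest point `p`, all polynomials that occur
are based at points within a multiple of `δ` of `p`, so they differ from the one at `p` by
`O(H δ ^ (1 + γ))` at scale `δ`; since the weights sum to `1` and have derivatives of order `δ⁻¹`
and `δ⁻²`, the same holds for `F`. Hence `DF` varies by at most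
`O(H δ ^ (γ - 1)) * ‖x - y‖ ≤ O(H) * ‖x - y‖ ^ γ` on balls of radius of order `δ`, and
points that are further apart are compared through nearest points of `Ω`. The sup bounds only follow
this way when `δ` is bounded, so the jet is first extended by zero to the points at distance at
least `1` from `Ω`.
-/

open Metric Set Function Filter Asymptotics Topology

theorem norm_smul_sub_smul_le {𝕜 V : Type*} [NormedField 𝕜] [SeminormedAddCommGroup V]
    [NormedSpace 𝕜 V] (s t : 𝕜) (v w : V) :
    ‖s • v - t • w‖ ≤ ‖s‖ * ‖v - w‖ + ‖s - t‖ * ‖w‖ := by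
  have hsplit : s • v - t • w = s • (v - w) + (s - t) • w := by module
  rw [hsplit]
  exact norm_add_le_of_le (norm_smul _ _).le (norm_smul _ _).le

theorem norm_smulRight_sub_le {𝕜 X V : Type*} [NontriviallyNormedField 𝕜]
    [SeminormedAddCommGroup X] [NormedSpace 𝕜 X] [SeminormedAddCommGroup V] [NormedSpace 𝕜 V]
    (φ ψ : X →L[𝕜] 𝕜) (v w : V) :
    ‖φ.smulRight v - ψ.smulRight w‖ ≤ ‖φ - ψ‖ * ‖v‖ + ‖ψ‖ * ‖v - w‖ := by
  have hsplit : φ.smulRight v - ψ.smulRight w = (φ - ψ).smulRight v + ψ.smulRight (v - w) := by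
    ext x
    simp only [add_apply, sub_apply, ContinuousLinearMap.smulRight_apply]
    module
  rw [hsplit]
  exact norm_add_le_of_le (ContinuousLinearMap.norm_smulRight_apply _ _).le
    (ContinuousLinearMap.norm_smulRight_apply _ _).le

section ScaledC11

variable {X V : Type*} [NormedAddCommGroup X] [NormedSpace ℝ X]
  [NormedAddCommGroup V] [NormedSpace ℝ V]

/-- Quantitative `C^{1,1}` regularity on `U` at length scale `r`: the function, its derivative and
the Lipschitz constant of its derivative are bounded by `a`, `a / r` and `a / r ^ 2`, so that the
single number `a` is invariant under rescaling. -/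
structure ScaledC11On (U : Set X) (h : X → V) (a r : ℝ) : Prop where
  differentiableAt : ∀ x ∈ U, DifferentiableAt ℝ h x
  norm_le : ∀ x ∈ U, ‖h x‖ ≤ a
  norm_fderiv_le : ∀ x ∈ U, ‖fderiv ℝ h x‖ ≤ a / r
  norm_fderiv_sub_le : ∀ x ∈ U, ∀ y ∈ U, ‖fderiv ℝ h x - fderiv ℝ h y‖ ≤ a / r ^ 2 * ‖x - y‖

namespace ScaledC11On

variable {U W : Set X} {h g : X → V} {s : X → ℝ} {a b r : ℝ}

theorem of_hasFDerivAt {h' : X → X →L[ℝ] V} (hd : ∀ x ∈ U, HasFDerivAt h (h' x) x)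
    (h0 : ∀ x ∈ U, ‖h x‖ ≤ a) (h1 : ∀ x ∈ U, ‖h' x‖ ≤ a / r)
    (h2 : ∀ x ∈ U, ∀ y ∈ U, ‖h' x - h' y‖ ≤ a / r ^ 2 * ‖x - y‖) : ScaledC11On U h a r where
  differentiableAt x hx := (hd x hx).differentiableAt
  norm_le := h0
  norm_fderiv_le x hx := by rw [(hd x hx).fderiv]; exact h1 x hx
  norm_fderiv_sub_le x hx y hy := by rw [(hd x hx).fderiv, (hd y hy).fderiv]; exact h2 x hx y hy

theorem hasFDerivAt {x : X} (hh : ScaledC11On U h a r) (hx : x ∈ U) :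
    HasFDerivAt h (fderiv ℝ h x) x :=
  (hh.differentiableAt x hx).hasFDerivAt

theorem nonneg {x : X} (hh : ScaledC11On U h a r) (hx : x ∈ U) : 0 ≤ a :=
  (norm_nonneg _).trans (hh.norm_le x hx)

theorem congr (hh : ScaledC11On U h a r) (hU : IsOpen U) (hg : EqOn g h U) :
    ScaledC11On U g a r :=
  of_hasFDerivAt
    (fun _ hx => (hh.hasFDerivAt hx).congr_of_eventuallyEq
      (hg.eventuallyEq_of_mem (hU.mem_nhds hx)))
    (fun x hx => (congrArg norm (hg hx)).trans_le (hh.norm_le x hx))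
    hh.norm_fderiv_le hh.norm_fderiv_sub_le

theorem mono (hh : ScaledC11On U h a r) (hWU : W ⊆ U) (hr : 0 ≤ r) (hab : a ≤ b) :
    ScaledC11On W h b r where
  differentiableAt x hx := hh.differentiableAt x (hWU hx)
  norm_le x hx := (hh.norm_le x (hWU hx)).trans hab
  norm_fderiv_le x hx := (hh.norm_fderiv_le x (hWU hx)).trans (by gcongr)
  norm_fderiv_sub_le x hx y hy :=
    (hh.norm_fderiv_sub_le x (hWU hx) y (hWU hy)).trans (by gcongr)

theorem change_scale (hh : ScaledC11On U h a r) {ρ k : ℝ} (hρ : 0 < ρ) (hk : 1 ≤ k)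
    (hρr : ρ ≤ k * r) : ScaledC11On U h (k ^ 2 * a) ρ := by
  have hr : 0 < r := by nlinarith
  have hk2 : k ≤ k ^ 2 := le_self_pow₀ hk two_ne_zero
  refine of_hasFDerivAt (fun x hx => hh.hasFDerivAt hx) (fun x hx => ?_) (fun x hx => ?_)
    (fun x hx y hy => ?_)
  all_goals have ha := hh.nonneg hx
  · exact (hh.norm_le x hx).trans (le_mul_of_one_le_left ha (one_le_pow₀ hk))
  · refine (hh.norm_fderiv_le x hx).trans ?_
    rw [div_le_div_iff₀ hr hρ]
    calc a * ρ ≤ a * (k * r) := by gcongr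
      _ ≤ a * (k ^ 2 * r) := by gcongr
      _ = k ^ 2 * a * r := by ring
  · refine (hh.norm_fderiv_sub_le x hx y hy).trans ?_
    gcongr ?_ * _
    rw [div_le_div_iff₀ (by positivity) (by positivity)]
    calc a * ρ ^ 2 ≤ a * (k * r) ^ 2 := by gcongr
      _ = k ^ 2 * a * r ^ 2 := by ring

theorem comp_homothety (hh : ScaledC11On U h a r) (c : X) {δ : ℝ} (hδ : 0 < δ) :
    ScaledC11On ((fun x => δ⁻¹ • (x - c)) ⁻¹' U) (fun x => h (δ⁻¹ • (x - c))) a (δ * r) := by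
  have hδ' : ‖δ⁻¹‖ = δ⁻¹ := Real.norm_of_nonneg (by positivity)
  have hd (x) (hx : δ⁻¹ • (x - c) ∈ U) : HasFDerivAt (fun x => h (δ⁻¹ • (x - c)))
      (δ⁻¹ • fderiv ℝ h (δ⁻¹ • (x - c))) x := by
    have := (hh.hasFDerivAt hx).comp x (((hasFDerivAt_id x).sub_const c).const_smul δ⁻¹)
    rwa [ContinuousLinearMap.comp_smul, ContinuousLinearMap.comp_id] at this
  refine of_hasFDerivAt hd (fun x hx => hh.norm_le _ hx) (fun x hx => ?_) (fun x hx y hy => ?_)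
  · rw [norm_smul, hδ']
    calc _ ≤ δ⁻¹ * (a / r) := by gcongr; exact hh.norm_fderiv_le _ hx
      _ = a / (δ * r) := by field_simp
  · have hxy : ‖δ⁻¹ • (x - c) - δ⁻¹ • (y - c)‖ = δ⁻¹ * ‖x - y‖ := by
      rw [← smul_sub, sub_sub_sub_cancel_right, norm_smul, hδ']
    rw [← smul_sub, norm_smul, hδ']
    calc _ ≤ δ⁻¹ * (a / r ^ 2 * (δ⁻¹ * ‖x - y‖)) := by
          gcongr; exact (hh.norm_fderiv_sub_le _ hx _ hy).trans_eq (by rw [hxy])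
      _ = a / (δ * r) ^ 2 * ‖x - y‖ := by field_simp

theorem norm_sub_le (hh : ScaledC11On U h a r) (hU : Convex ℝ U) {x y : X} (hx : x ∈ U)
    (hy : y ∈ U) : ‖h x - h y‖ ≤ a / r * ‖x - y‖ :=
  hU.norm_image_sub_le_of_norm_fderiv_le hh.differentiableAt hh.norm_fderiv_le hy hx

theorem sum {ι : Type*} {t : Finset ι} {h : ι → X → V}
    (hh : ∀ i ∈ t, ScaledC11On U (h i) a r) :
    ScaledC11On U (fun x => ∑ i ∈ t, h i x) (t.card * a) r := by
  refine of_hasFDerivAt (h' := fun x => ∑ i ∈ t, fderiv ℝ (h i) x)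
    (fun x hx => HasFDerivAt.fun_sum fun i hi => (hh i hi).hasFDerivAt hx)
    (fun x hx => ?_) (fun x hx => ?_) (fun x hx y hy => ?_)
  · refine (norm_sum_le_of_le t fun i hi => (hh i hi).norm_le x hx).trans_eq ?_
    rw [Finset.sum_const, nsmul_eq_mul]
  · refine (norm_sum_le_of_le t fun i hi => (hh i hi).norm_fderiv_le x hx).trans_eq ?_
    rw [Finset.sum_const, nsmul_eq_mul, mul_div_assoc]
  · rw [← Finset.sum_sub_distrib]
    refine (norm_sum_le_of_le t fun i hi => (hh i hi).norm_fderiv_sub_le x hx y hy).trans_eq ?_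
    rw [Finset.sum_const, nsmul_eq_mul, mul_div_assoc, mul_assoc]

theorem smul (hs : ScaledC11On U s a r) (hg : ScaledC11On U g b r) (hU : Convex ℝ U)
    (hr : 0 < r) : ScaledC11On U (fun x => s x • g x) (4 * (a * b)) r := by
  refine of_hasFDerivAt (h' := fun x => s x • fderiv ℝ g x + (fderiv ℝ s x).smulRight (g x))
    (fun x hx => (hs.hasFDerivAt hx).fun_smul (hg.hasFDerivAt hx))
    (fun x hx => ?_) (fun x hx => ?_) (fun x hx y hy => ?_)
  all_goals
    have ha := hs.nonneg hx
    have hb := hg.nonneg hx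
  · calc ‖s x • g x‖ = ‖s x‖ * ‖g x‖ := norm_smul _ _
      _ ≤ a * b := by gcongr; exacts [hs.norm_le x hx, hg.norm_le x hx]
      _ ≤ 4 * (a * b) := le_mul_of_one_le_left (by positivity) (by norm_num)
  · calc ‖s x • fderiv ℝ g x + (fderiv ℝ s x).smulRight (g x)‖
        ≤ ‖s x‖ * ‖fderiv ℝ g x‖ + ‖fderiv ℝ s x‖ * ‖g x‖ :=
          norm_add_le_of_le (norm_smul _ _).le (ContinuousLinearMap.norm_smulRight_apply _ _).le
      _ ≤ a * (b / r) + a / r * b := by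
          gcongr
          exacts [hs.norm_le x hx, hg.norm_fderiv_le x hx, hs.norm_fderiv_le x hx, hg.norm_le x hx]
      _ = 2 * (a * b) / r := by ring
      _ ≤ 4 * (a * b) / r := by gcongr; norm_num
  · calc _ ≤ (‖s x‖ * ‖fderiv ℝ g x - fderiv ℝ g y‖ + ‖s x - s y‖ * ‖fderiv ℝ g y‖) +
          (‖fderiv ℝ s x - fderiv ℝ s y‖ * ‖g x‖ + ‖fderiv ℝ s y‖ * ‖g x - g y‖) := by
          rw [add_sub_add_comm]
          exact norm_add_le_of_le (norm_smul_sub_smul_le _ _ _ _) (norm_smulRight_sub_le _ _ _ _)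
      _ ≤ (a * (b / r ^ 2 * ‖x - y‖) + a / r * ‖x - y‖ * (b / r)) +
          (a / r ^ 2 * ‖x - y‖ * b + a / r * (b / r * ‖x - y‖)) := by
          gcongr
          exacts [hs.norm_le x hx, hg.norm_fderiv_sub_le x hx y hy, hs.norm_sub_le hU hx hy,
            hg.norm_fderiv_le y hy, hs.norm_fderiv_sub_le x hx y hy, hg.norm_le x hx,
            hs.norm_fderiv_le y hy, hg.norm_sub_le hU hx hy]
      _ = 4 * (a * b) / r ^ 2 * ‖x - y‖ := by field_simp; ring

end ScaledC11On

theorem abs_inv_sq_sub_inv_sq_le {p q : ℝ} (hp : 1 ≤ p) (hq : 1 ≤ q) :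
    |(q ^ 2)⁻¹ - (p ^ 2)⁻¹| ≤ 2 * |p - q| := by
  have : 0 < p := zero_lt_one.trans_le hp
  have : 0 < q := zero_lt_one.trans_le hq
  have hp1 : p⁻¹ ≤ 1 := inv_le_one_of_one_le₀ hp
  have hq1 : q⁻¹ ≤ 1 := inv_le_one_of_one_le₀ hq
  calc |(q ^ 2)⁻¹ - (p ^ 2)⁻¹| = |(p⁻¹ * q⁻¹ * (p⁻¹ + q⁻¹)) * (p - q)| := by
        congr 1; field_simp; ring
    _ = p⁻¹ * q⁻¹ * (p⁻¹ + q⁻¹) * |p - q| := by rw [abs_mul, abs_of_pos (by positivity)]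
    _ ≤ 1 * 1 * (1 + 1) * |p - q| := by gcongr
    _ = 2 * |p - q| := by ring

theorem ScaledC11On.inv {U : Set X} {s : X → ℝ} {a r : ℝ} (hs : ScaledC11On U s a r)
    (hU : Convex ℝ U) (h1 : ∀ x ∈ U, 1 ≤ s x) (hr : 0 < r) :
    ScaledC11On U (fun x => (s x)⁻¹) (3 * a ^ 2) r := by
  have hs0 (x) (hx : x ∈ U) : 0 < s x := zero_lt_one.trans_le (h1 x hx)
  have hsq (x) (hx : x ∈ U) : ‖-(s x ^ 2)⁻¹‖ ≤ 1 := by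
    rw [norm_neg, Real.norm_of_nonneg (by positivity)]
    exact inv_le_one_of_one_le₀ (one_le_pow₀ (h1 x hx))
  refine of_hasFDerivAt (h' := fun x => (-(s x ^ 2)⁻¹) • fderiv ℝ s x)
    (fun x hx => (hasDerivAt_inv (hs0 x hx).ne').comp_hasFDerivAt x (hs.hasFDerivAt hx))
    (fun x hx => ?_) (fun x hx => ?_) (fun x hx y hy => ?_)
  all_goals
    have ha : 1 ≤ a := (h1 x hx).trans ((Real.le_norm_self _).trans (hs.norm_le x hx))
    have ha2 : a ≤ a ^ 2 := le_self_pow₀ ha two_ne_zero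
  · rw [norm_inv]
    have : ‖s x‖⁻¹ ≤ 1 := inv_le_one_of_one_le₀ ((h1 x hx).trans (Real.le_norm_self _))
    linarith
  · calc ‖(-(s x ^ 2)⁻¹) • fderiv ℝ s x‖ = ‖-(s x ^ 2)⁻¹‖ * ‖fderiv ℝ s x‖ := norm_smul _ _
      _ ≤ 1 * (a / r) := by gcongr; exacts [hsq x hx, hs.norm_fderiv_le x hx]
      _ ≤ 3 * a ^ 2 / r := by rw [one_mul]; gcongr; linarith
  · have hdiff : ‖-(s x ^ 2)⁻¹ - -(s y ^ 2)⁻¹‖ ≤ 2 * (a / r * ‖x - y‖) := by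
      rw [neg_sub_neg]
      exact (abs_inv_sq_sub_inv_sq_le (h1 x hx) (h1 y hy)).trans
        (by gcongr; exact hs.norm_sub_le hU hx hy)
    calc _ ≤ ‖-(s x ^ 2)⁻¹‖ * ‖fderiv ℝ s x - fderiv ℝ s y‖ +
          ‖-(s x ^ 2)⁻¹ - -(s y ^ 2)⁻¹‖ * ‖fderiv ℝ s y‖ := norm_smul_sub_smul_le _ _ _ _
      _ ≤ 1 * (a / r ^ 2 * ‖x - y‖) + 2 * (a / r * ‖x - y‖) * (a / r) := by
          gcongr
          exacts [hsq x hx, hs.norm_fderiv_sub_le x hx y hy, hs.norm_fderiv_le y hy]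
      _ = (a + 2 * a ^ 2) / r ^ 2 * ‖x - y‖ := by field_simp
      _ ≤ 3 * a ^ 2 / r ^ 2 * ‖x - y‖ := by gcongr; linarith

theorem exists_scaledC11On_univ_of_hasCompactSupport {h : X → V} (hh : ContDiff ℝ 2 h)
    (hc : HasCompactSupport h) : ∃ a, ScaledC11On univ h a 1 := by
  have hh' : ContDiff ℝ 1 (fderiv ℝ h) := hh.fderiv_right (by norm_num)
  obtain ⟨M₀, hM₀⟩ := hc.exists_bound_of_continuous hh.continuous
  obtain ⟨M₁, hM₁⟩ := (hc.fderiv ℝ).exists_bound_of_continuous hh'.continuous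
  obtain ⟨M₂, hM₂⟩ := hh'.lipschitzWith_of_hasCompactSupport (hc.fderiv ℝ) one_ne_zero
  refine ⟨max M₀ (max M₁ M₂), fun x _ => hh.differentiable two_ne_zero x,
    fun x _ => (hM₀ x).trans (le_max_left _ _), fun x _ => ?_, fun x _ y _ => ?_⟩
  · rw [div_one]
    exact (hM₁ x).trans (le_max_of_le_right (le_max_left _ _))
  · rw [one_pow, div_one]
    refine (hM₂.norm_sub_le x y).trans ?_
    gcongr
    exact le_max_of_le_right (le_max_right _ _)

end ScaledC11

section WhitneyNet

variable {X : Type*} [PseudoMetricSpace X]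

/-- A discretisation of the complement of `Ω` whose mesh at each point is comparable to the
distance to `Ω`; it plays the role of the centres of the Whitney cubes. -/
structure IsWhitneyNet (Ω u : Set X) : Prop where
  subset_compl : u ⊆ Ωᶜ
  pairwise_infDist_lt : u.Pairwise fun b c => infDist b Ω < 5 * dist b c
  exists_dist_le : ∀ x ∉ Ω, ∃ b ∈ u, 4 * dist x b ≤ infDist b Ω

theorem exists_maximal_subset_pairwise {α : Type*} (s : Set α) (r : α → α → Prop) :
    ∃ u, Maximal (fun u : Set α => u ⊆ s ∧ u.Pairwise r) u :=
  zorn_subset {u | u ⊆ s ∧ u.Pairwise r} fun c hc hchain =>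
    ⟨⋃₀ c, ⟨sUnion_subset fun _ ht => (hc ht).1,
      (pairwise_sUnion hchain.directedOn).2 fun _ ht => (hc ht).2⟩,
      fun _ => subset_sUnion_of_mem⟩

theorem exists_isWhitneyNet (Ω : Set X) : ∃ u, IsWhitneyNet Ω u := by
  obtain ⟨u, ⟨hu, hsep⟩, hmax⟩ :=
    exists_maximal_subset_pairwise Ωᶜ fun b c => infDist b Ω < 5 * dist b c
  refine ⟨u, hu, hsep, fun x hx => ?_⟩
  by_cases hxu : x ∈ u
  · exact ⟨x, hxu, by rw [dist_self, mul_zero]; exact infDist_nonneg⟩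
  by_contra! hfar
  have hins : insert x u ⊆ Ωᶜ ∧ (insert x u).Pairwise fun b c => infDist b Ω < 5 * dist b c := by
    refine ⟨insert_subset hx hu, hsep.insert_of_notMem hxu fun b hb => ⟨?_, ?_⟩⟩
    · linarith [hfar b hb, infDist_le_infDist_add_dist (s := Ω) (x := x) (y := b)]
    · rw [dist_comm b x]
      linarith [hfar b hb, dist_nonneg (x := x) (y := b)]
  exact hxu (hmax hins (subset_insert x u) (mem_insert x u))

/-- The points of the net `u` whose bump functions can be nonzero near `x₀`. -/
def nearCentres (Ω u : Set X) (x₀ : X) : Set X :=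
  {b ∈ u | dist b x₀ ≤ 2 * infDist x₀ Ω ∧ infDist x₀ Ω ≤ 2 * infDist b Ω}

end WhitneyNet

section WhitneyPartition

variable {X : Type*} [NormedAddCommGroup X] [NormedSpace ℝ X]

theorem exists_encard_le_of_pairwise_lt_dist (X : Type*) [NormedAddCommGroup X] [NormedSpace ℝ X]
    [ProperSpace X] (R : ℝ) {ε : ℝ} (hε : 0 < ε) :
    ∃ N : ℕ, ∀ (x₀ : X) (δ : ℝ) (s : Set X), 0 < δ → s ⊆ closedBall x₀ (R * δ) →
      (s.Pairwise fun x y => ε * δ < dist x y) → s.encard ≤ N := by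
  lift ε to NNReal using hε.le
  obtain ⟨t, -, htf, ht⟩ := exists_finite_isCover_of_isCompact (ε := ε / 2)
    (by exact_mod_cast (half_pos hε).ne') (isCompact_closedBall (0 : X) R)
  refine ⟨t.ncard, fun x₀ δ s hδ hs hsep => ?_⟩
  have hdist (x y : X) : dist (δ⁻¹ • (x - x₀)) (δ⁻¹ • (y - x₀)) = δ⁻¹ * dist x y := by
    rw [dist_smul₀, dist_sub_right, Real.norm_of_nonneg (by positivity)]
  have hinj : InjOn (fun x => δ⁻¹ • (x - x₀)) s :=
    ((smul_right_injective X (inv_ne_zero hδ.ne')).comp sub_left_injective).injOn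
  have hball : (fun x => δ⁻¹ • (x - x₀)) '' s ⊆ closedBall 0 R := by
    rintro _ ⟨x, hx, rfl⟩
    have := hdist x x₀
    rw [sub_self, smul_zero] at this
    rw [mem_closedBall, this, inv_mul_le_iff₀ hδ, mul_comm]
    exact hs hx
  have hsep' : IsSeparated ε ((fun x => δ⁻¹ • (x - x₀)) '' s) := by
    refine hinj.pairwise_image.2 fun x hx y hy hxy => ?_
    rw [onFun, edist_dist, hdist, ENNReal.lt_ofReal_iff_toReal_lt ENNReal.coe_ne_top,
      ENNReal.coe_toReal, lt_inv_mul_iff₀ hδ, mul_comm]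
    exact hsep hx hy hxy
  calc s.encard = ((fun x => δ⁻¹ • (x - x₀)) '' s).encard := hinj.encard_image.symm
    _ ≤ packingNumber (2 * (ε / 2)) (closedBall (0 : X) R) := by
        rw [mul_div_cancel₀ _ two_ne_zero]; exact hsep'.encard_le_packingNumber hball
    _ ≤ externalCoveringNumber (ε / 2) (closedBall (0 : X) R) :=
        packingNumber_two_mul_le_externalCoveringNumber _ _
    _ ≤ t.encard := ht.externalCoveringNumber_le_encard
    _ = t.ncard := htf.cast_ncard_eq.symm

theorem exists_encard_nearCentres_le (X : Type*) [NormedAddCommGroup X] [NormedSpace ℝ X]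
    [ProperSpace X] :
    ∃ N : ℕ, ∀ (Ω u : Set X) (x₀ : X), IsWhitneyNet Ω u → 0 < infDist x₀ Ω →
      (nearCentres Ω u x₀).encard ≤ N := by
  obtain ⟨N, hN⟩ := exists_encard_le_of_pairwise_lt_dist X 2 (ε := 1 / 10) (by norm_num)
  refine ⟨N, fun Ω u x₀ hu hδ => hN x₀ _ _ hδ (fun b hb => hb.2.1) fun b hb c hc hbc => ?_⟩
  linarith [hu.pairwise_infDist_lt hb.1 hc.1 hbc, hb.2.2]

/-- A partition of unity near `x₀` at scale `δ`, where `δ` stands for the distance from `x₀` to a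
closed set: on the ball of radius `δ / 8` only the functions indexed by `I` are nonzero. -/
structure IsLocalWhitneyPartition (φ : X → X → ℝ) (I : Finset X) (x₀ : X) (δ K : ℝ) : Prop where
  dist_le : ∀ b ∈ I, dist b x₀ ≤ 2 * δ
  scaledC11On : ∀ b ∈ I, ScaledC11On (ball x₀ (δ / 8)) (φ b) K δ
  eq_zero : ∀ b ∉ I, ∀ x ∈ ball x₀ (δ / 8), φ b x = 0
  sum_eq_one : ∀ x ∈ ball x₀ (δ / 8), ∑ b ∈ I, φ b x = 1

theorem norm_inv_infDist_smul_sub {Ω : Set X} {b x : X} :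
    ‖(infDist b Ω)⁻¹ • (x - b)‖ = dist x b / infDist b Ω := by
  rw [norm_smul, norm_inv, Real.norm_of_nonneg infDist_nonneg, dist_eq_norm, div_eq_inv_mul]

variable [FiniteDimensional ℝ X]

/-- The profile, rescaled below, of the bump functions of the Whitney partition of unity. -/
def unitBump (X : Type*) [NormedAddCommGroup X] [NormedSpace ℝ X] : ContDiffBump (0 : X) where
  rIn := 1 / 4
  rOut := 1 / 2
  rIn_pos := by norm_num
  rIn_lt_rOut := by norm_num

/-- The bump function centred at `b`, of radius comparable to the distance from `b` to `Ω`; it is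
zero unless `b` belongs to the net `u`, so that sums over the net become sums over all `b`. -/
def whitneyBump (Ω u : Set X) (b x : X) : ℝ :=
  u.indicator (fun c => unitBump X ((infDist c Ω)⁻¹ • (x - c))) b

/-- The denominator of the Whitney partition of unity. -/
def whitneyBumpSum (Ω u : Set X) (x : X) : ℝ := ∑ᶠ b, whitneyBump Ω u b x

/-- The Whitney partition of unity obtained by normalising the bump functions of the net `u`. -/
def whitneyWeight (Ω u : Set X) (b x : X) : ℝ := (whitneyBumpSum Ω u x)⁻¹ • whitneyBump Ω u b x

variable {Ω u : Set X} {b x x₀ : X} {I : Finset X} {M : ℝ}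

theorem whitneyBump_nonneg : 0 ≤ whitneyBump Ω u b x :=
  indicator_nonneg (fun _ _ => (unitBump X).nonneg) b

theorem whitneyBump_eq_one (hb : b ∈ u) (hbΩ : 0 < infDist b Ω)
    (hxb : 4 * dist x b ≤ infDist b Ω) : whitneyBump Ω u b x = 1 := by
  rw [whitneyBump, indicator_of_mem hb]
  refine (unitBump X).one_of_mem_closedBall ?_
  rw [mem_closedBall_zero_iff, norm_inv_infDist_smul_sub, div_le_iff₀ hbΩ]
  change _ ≤ 1 / 4 * _
  linarith

theorem whitneyBump_eq_zero (hbΩ : 0 < infDist b Ω) (hxb : infDist b Ω ≤ 2 * dist x b) :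
    whitneyBump Ω u b x = 0 := by
  refine indicator_apply_eq_zero.2 fun _ => (unitBump X).zero_of_le_dist ?_
  rw [dist_zero_right, norm_inv_infDist_smul_sub, le_div_iff₀ hbΩ]
  change 1 / 2 * _ ≤ _
  linarith

theorem exists_scaledC11On_whitneyBump (X : Type*) [NormedAddCommGroup X] [NormedSpace ℝ X]
    [FiniteDimensional ℝ X] :
    ∃ M, ∀ (Ω u : Set X), ∀ b ∈ u, ∀ r, 0 < r → r ≤ 2 * infDist b Ω →
      ScaledC11On univ (whitneyBump Ω u b) M r := by
  obtain ⟨a, ha⟩ := exists_scaledC11On_univ_of_hasCompactSupport (unitBump X).contDiff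
    (unitBump X).hasCompactSupport
  refine ⟨2 ^ 2 * a, fun Ω u b hb r hr hrb => ?_⟩
  have hbump : whitneyBump Ω u b = fun x => unitBump X ((infDist b Ω)⁻¹ • (x - b)) :=
    funext fun x => indicator_of_mem hb _
  have hscaled := ha.comp_homothety b (δ := infDist b Ω) (by linarith)
  rw [preimage_univ, mul_one] at hscaled
  rw [hbump]
  exact hscaled.change_scale hr one_le_two hrb

theorem whitneyBump_eq_zero_of_notMem_nearCentres (hΩ : ∀ b ∈ u, 0 < infDist b Ω)
    (hb : b ∉ nearCentres Ω u x₀) (hx : x ∈ ball x₀ (infDist x₀ Ω / 8)) :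
    whitneyBump Ω u b x = 0 := by
  by_cases hbu : b ∈ u
  swap
  · exact indicator_of_notMem hbu _
  refine whitneyBump_eq_zero (hΩ b hbu) ?_
  by_contra! hxb
  rw [mem_ball] at hx
  have hbx₀ : dist b x₀ ≤ dist x b + dist x x₀ := by
    rw [dist_comm x b]; exact dist_triangle b x x₀
  have hb_le := infDist_le_infDist_add_dist (s := Ω) (x := b) (y := x₀)
  have hx₀_le := infDist_le_infDist_add_dist (s := Ω) (x := x₀) (y := b)
  rw [dist_comm x₀ b] at hx₀_le
  exact hb ⟨hbu, by linarith, by linarith⟩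

theorem whitneyBumpSum_eq_sum (hΩ : ∀ b ∈ u, 0 < infDist b Ω) (hI : ↑I = nearCentres Ω u x₀)
    (hx : x ∈ ball x₀ (infDist x₀ Ω / 8)) :
    whitneyBumpSum Ω u x = ∑ b ∈ I, whitneyBump Ω u b x := by
  refine finsum_eq_sum_of_support_subset _ fun b hb => ?_
  rw [hI]
  by_contra hbI
  exact hb (whitneyBump_eq_zero_of_notMem_nearCentres hΩ hbI hx)

theorem one_le_whitneyBumpSum (hu : IsWhitneyNet Ω u) (hΩ : ∀ b ∉ Ω, 0 < infDist b Ω)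
    (hI : ↑I = nearCentres Ω u x₀) (hx : x ∈ ball x₀ (infDist x₀ Ω / 8)) :
    1 ≤ whitneyBumpSum Ω u x := by
  have hΩu (b) (hb : b ∈ u) : 0 < infDist b Ω := hΩ b (hu.subset_compl hb)
  have hxΩ : x ∉ Ω := disjoint_left.1 disjoint_ball_infDist
    (ball_subset_ball (div_le_self infDist_nonneg (by norm_num)) hx)
  obtain ⟨b, hbu, hxb⟩ := hu.exists_dist_le x hxΩ
  have hone := whitneyBump_eq_one hbu (hΩu b hbu) hxb
  have hbI : b ∈ I := by
    rw [← Finset.mem_coe, hI]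
    by_contra hb
    exact one_ne_zero (hone.symm.trans (whitneyBump_eq_zero_of_notMem_nearCentres hΩu hb hx))
  rw [whitneyBumpSum_eq_sum hΩu hI hx, ← hone]
  exact Finset.single_le_sum (f := fun c => whitneyBump Ω u c x) (fun c _ => whitneyBump_nonneg) hbI

theorem isLocalWhitneyPartition_whitneyWeight (hu : IsWhitneyNet Ω u)
    (hΩ : ∀ b ∉ Ω, 0 < infDist b Ω) (hx₀ : x₀ ∉ Ω) (hI : ↑I = nearCentres Ω u x₀)
    (hM : ∀ b ∈ I, ScaledC11On univ (whitneyBump Ω u b) M (infDist x₀ Ω)) :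
    IsLocalWhitneyPartition (whitneyWeight Ω u) I x₀ (infDist x₀ Ω)
      (4 * (3 * (I.card * M) ^ 2 * M)) := by
  have hΩu (b) (hb : b ∈ u) : 0 < infDist b Ω := hΩ b (hu.subset_compl hb)
  have hM' (b) (hb : b ∈ I) : ScaledC11On (ball x₀ (infDist x₀ Ω / 8)) (whitneyBump Ω u b) M
      (infDist x₀ Ω) := (hM b hb).mono (subset_univ _) infDist_nonneg le_rfl
  have hsum : ScaledC11On (ball x₀ (infDist x₀ Ω / 8)) (whitneyBumpSum Ω u) (I.card * M)
      (infDist x₀ Ω) :=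
    (ScaledC11On.sum hM').congr isOpen_ball fun x => whitneyBumpSum_eq_sum hΩu hI
  refine ⟨fun b hb => ?_, fun b hb => ?_, fun b hb x hx => ?_, fun x hx => ?_⟩
  · exact (hI.subset hb).2.1
  · exact (hsum.inv (convex_ball _ _) (fun x => one_le_whitneyBumpSum hu hΩ hI) (hΩ x₀ hx₀)).smul
      (hM' b hb) (convex_ball _ _) (hΩ x₀ hx₀)
  · rw [← Finset.mem_coe, hI] at hb
    rw [whitneyWeight, whitneyBump_eq_zero_of_notMem_nearCentres hΩu hb hx, smul_zero]
  · have hne : whitneyBumpSum Ω u x ≠ 0 :=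
      (zero_lt_one.trans_le (one_le_whitneyBumpSum hu hΩ hI hx)).ne'
    simp only [whitneyWeight]
    rw [← Finset.smul_sum, ← whitneyBumpSum_eq_sum hΩu hI hx, smul_eq_mul, inv_mul_cancel₀ hne]

theorem exists_whitneyPartition (X : Type*) [NormedAddCommGroup X] [NormedSpace ℝ X]
    [FiniteDimensional ℝ X] :
    ∃ (N : ℕ) (K : ℝ), 0 ≤ K ∧ ∀ Ω : Set X, IsClosed Ω → Ω.Nonempty →
      ∃ φ : X → X → ℝ, ∀ x₀ ∉ Ω, ∃ I : Finset X, I.card ≤ N ∧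
        IsLocalWhitneyPartition φ I x₀ (infDist x₀ Ω) K := by
  have : ProperSpace X := FiniteDimensional.proper ℝ X
  obtain ⟨N, hN⟩ := exists_encard_nearCentres_le X
  obtain ⟨M, hM⟩ := exists_scaledC11On_whitneyBump X
  refine ⟨N, 4 * (3 * (N * |M|) ^ 2 * |M|), by positivity, fun Ω hΩ hne => ?_⟩
  have hpos (x) (hx : x ∉ Ω) : 0 < infDist x Ω := (hΩ.notMem_iff_infDist_pos hne).1 hx
  obtain ⟨u, hu⟩ := exists_isWhitneyNet Ω
  refine ⟨whitneyWeight Ω u, fun x₀ hx₀ => ?_⟩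
  have hcard := hN Ω u x₀ hu (hpos x₀ hx₀)
  obtain ⟨I, hI⟩ := (finite_of_encard_le_coe hcard).exists_finset_coe
  have hIN : I.card ≤ N := by
    rw [← hI, encard_coe_eq_coe_finsetCard] at hcard
    exact_mod_cast hcard
  have hφ := isLocalWhitneyPartition_whitneyWeight hu hpos hx₀ hI (M := |M|) fun b hb =>
    have hb' := hI.subset hb
    (hM Ω u b hb'.1 _ (hpos x₀ hx₀) hb'.2.2).mono subset_rfl infDist_nonneg (le_abs_self M)
  refine ⟨I, hIN, { hφ with scaledC11On := fun b hb => ?_ }⟩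
  exact (hφ.scaledC11On b hb).mono subset_rfl infDist_nonneg (by gcongr)

end WhitneyPartition

theorem mul_rpow_le_mul_rpow {k t γ : ℝ} (hk : 1 ≤ k) (ht : 0 ≤ t) (hγ1 : γ ≤ 1) :
    (k * t) ^ γ ≤ k * t ^ γ := by
  rw [Real.mul_rpow (zero_le_one.trans hk) ht]
  gcongr
  exact (Real.rpow_le_rpow_of_exponent_le hk hγ1).trans_eq (Real.rpow_one k)

theorem rpow_one_add_div_sq_mul_le {δ t γ : ℝ} (hδ : 0 < δ) (ht : 0 ≤ t) (htδ : t ≤ δ)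
    (hγ1 : γ ≤ 1) : δ ^ (1 + γ) / δ ^ 2 * t ≤ t ^ γ := by
  have hsplit : t = t ^ γ * t ^ (1 - γ) := by
    rw [← Real.rpow_add' ht (by linarith), add_sub_cancel, Real.rpow_one]
  calc δ ^ (1 + γ) / δ ^ 2 * t = δ ^ (1 + γ) / δ ^ 2 * (t ^ γ * t ^ (1 - γ)) := by rw [← hsplit]
    _ ≤ δ ^ (1 + γ) / δ ^ 2 * (t ^ γ * δ ^ (1 - γ)) := by gcongr
    _ = δ ^ (1 + γ) * δ ^ (1 - γ) / δ ^ 2 * t ^ γ := by ring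
    _ = t ^ γ := by
        rw [← Real.rpow_add hδ, ← Real.rpow_natCast, ← Real.rpow_sub hδ]
        norm_num

theorem isLittleO_rpow_norm_sub_sub {X : Type*} [NormedAddCommGroup X] {γ : ℝ} (hγ0 : 0 < γ)
    (u : X) : (fun x => ‖x - u‖ ^ (1 + γ)) =o[𝓝 u] fun x => x - u := by
  have hlim : Tendsto (fun x => ‖x - u‖ ^ γ) (𝓝 u) (𝓝 0) := by
    have := ((continuous_sub_right u).norm.rpow_const fun _ => .inr hγ0.le).tendsto u
    rwa [sub_self, norm_zero, Real.zero_rpow hγ0.ne'] at this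
  have hmul := ((isLittleO_one_iff ℝ).2 hlim).mul_isBigO (isBigO_refl (fun x => ‖x - u‖) (𝓝 u))
  simp only [one_mul, isLittleO_norm_right] at hmul
  refine hmul.congr_left fun x => ?_
  rw [add_comm, Real.rpow_add_one' (norm_nonneg _) (by positivity)]

section LipJet

variable {X V : Type*} [NormedAddCommGroup X] [NormedSpace ℝ X]
  [NormedAddCommGroup V] [NormedSpace ℝ V]

/-- The first-order Taylor polynomial at `p` of a jet `(f, G)`, where `G` is the candidate
derivative of `f`. -/
def taylorAt (f : X → V) (G : X → X →L[ℝ] V) (p x : X) : V := f p + G p (x - p)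

/-- A bounded `Lip(1 + γ)` function on `Ω`, with a bound `H` for its Lipschitz norm. -/
structure IsLipJet (Ω : Set X) (f : X → V) (G : X → X →L[ℝ] V) (H γ : ℝ) : Prop where
  nonneg : 0 ≤ H
  norm_le : ∀ u ∈ Ω, ‖f u‖ ≤ H
  norm_deriv_le : ∀ u ∈ Ω, ‖G u‖ ≤ H
  norm_deriv_sub_le : ∀ u ∈ Ω, ∀ v ∈ Ω, ‖G u - G v‖ ≤ H * ‖u - v‖ ^ γ
  norm_remainder_le : ∀ u ∈ Ω, ∀ v ∈ Ω, ‖f u - f v - G v (u - v)‖ ≤ H * ‖u - v‖ ^ (1 + γ)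

theorem hasFDerivAt_taylorAt (f : X → V) (G : X → X →L[ℝ] V) (p x : X) :
    HasFDerivAt (taylorAt f G p) (G p) x := by
  have h := (((G p).hasFDerivAt (x := x - p)).comp x ((hasFDerivAt_id x).sub_const p)).const_add
    (f p)
  rwa [ContinuousLinearMap.comp_id] at h

theorem sub_taylorAt (f : X → V) (G : X → X →L[ℝ] V) (p : X) (v : V) (x : X) :
    v - taylorAt f G p x = v - f p - G p (x - p) :=
  (sub_sub _ _ _).symm

namespace IsLipJet

variable {Ω : Set X} {f : X → V} {G : X → X →L[ℝ] V} {H γ k t : ℝ} {p q x : X}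

theorem norm_deriv_sub_le_mul (hJ : IsLipJet Ω f G H γ) (hγ0 : 0 ≤ γ) (hγ1 : γ ≤ 1)
    (hp : p ∈ Ω) (hq : q ∈ Ω) (hk : 1 ≤ k) (ht : 0 ≤ t) (hqp : ‖q - p‖ ≤ k * t) :
    ‖G q - G p‖ ≤ k * (H * t ^ γ) := by
  have := hJ.nonneg
  calc ‖G q - G p‖ ≤ H * ‖q - p‖ ^ γ := hJ.norm_deriv_sub_le q hq p hp
    _ ≤ H * (k * t) ^ γ := by gcongr
    _ ≤ H * (k * t ^ γ) := by gcongr; exact mul_rpow_le_mul_rpow hk ht hγ1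
    _ = k * (H * t ^ γ) := by ring

theorem norm_taylorAt_sub_le (hJ : IsLipJet Ω f G H γ) (hγ0 : 0 ≤ γ) (hγ1 : γ ≤ 1)
    (hp : p ∈ Ω) (hq : q ∈ Ω) (hk : 1 ≤ k) (ht : 0 ≤ t) (hqp : ‖q - p‖ ≤ k * t)
    (hxq : ‖x - q‖ ≤ k * t) :
    ‖taylorAt f G q x - taylorAt f G p x‖ ≤ 2 * k ^ 2 * (H * t ^ (1 + γ)) := by
  have hH := hJ.nonneg
  have hsplit : taylorAt f G q x - taylorAt f G p x =
      (f q - f p - G p (q - p)) + (G q - G p) (x - q) := by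
    simp only [taylorAt, sub_apply, map_sub]
    abel
  have hrem : ‖f q - f p - G p (q - p)‖ ≤ k ^ 2 * (H * t ^ (1 + γ)) := by
    calc _ ≤ H * ‖q - p‖ ^ (1 + γ) := hJ.norm_remainder_le q hq p hp
      _ ≤ H * (k * t) ^ (1 + γ) := by gcongr
      _ = H * (k * t * (k * t) ^ γ) := by
          rw [Real.rpow_one_add' (by positivity) (by positivity)]
      _ ≤ H * (k * t * (k * t ^ γ)) := by gcongr; exact mul_rpow_le_mul_rpow hk ht hγ1
      _ = k ^ 2 * (H * t ^ (1 + γ)) := by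
          rw [Real.rpow_one_add' ht (by positivity)]; ring
  have hlin : ‖(G q - G p) (x - q)‖ ≤ k ^ 2 * (H * t ^ (1 + γ)) := by
    calc _ ≤ k * (H * t ^ γ) * (k * t) :=
          (G q - G p).le_of_opNorm_le_of_le
            (hJ.norm_deriv_sub_le_mul hγ0 hγ1 hp hq hk ht hqp) hxq
      _ = k ^ 2 * (H * t ^ (1 + γ)) := by
          rw [Real.rpow_one_add' ht (by positivity)]; ring
  calc _ ≤ k ^ 2 * (H * t ^ (1 + γ)) + k ^ 2 * (H * t ^ (1 + γ)) := by
        rw [hsplit]; exact norm_add_le_of_le hrem hlin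
    _ = 2 * k ^ 2 * (H * t ^ (1 + γ)) := by ring

theorem scaledC11On_taylorAt_sub (hJ : IsLipJet Ω f G H γ) (hγ0 : 0 ≤ γ) (hγ1 : γ ≤ 1)
    (hp : p ∈ Ω) (hq : q ∈ Ω) (hk : 1 ≤ k) (ht : 0 < t) (hqp : ‖q - p‖ ≤ k * t) {U : Set X}
    (hU : ∀ x ∈ U, ‖x - q‖ ≤ k * t) :
    ScaledC11On U (fun x => taylorAt f G q x - taylorAt f G p x)
      (2 * k ^ 2 * (H * t ^ (1 + γ))) t := by
  have := hJ.nonneg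
  refine .of_hasFDerivAt (h' := fun _ => G q - G p)
    (fun x _ => (hasFDerivAt_taylorAt f G q x).fun_sub (hasFDerivAt_taylorAt f G p x))
    (fun x hx => hJ.norm_taylorAt_sub_le hγ0 hγ1 hp hq hk ht.le hqp (hU x hx))
    (fun x _ => ?_) (fun x _ y _ => ?_)
  · calc ‖G q - G p‖ ≤ k * (H * t ^ γ) :=
          hJ.norm_deriv_sub_le_mul hγ0 hγ1 hp hq hk ht.le hqp
      _ ≤ 2 * k ^ 2 * (H * t ^ γ) := by gcongr; nlinarith
      _ = 2 * k ^ 2 * (H * t ^ (1 + γ)) / t := by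
          rw [Real.rpow_one_add' ht.le (by positivity)]; field_simp
  · rw [sub_self, norm_zero]
    positivity

theorem congr {f' : X → V} {G' : X → X →L[ℝ] V} (hJ : IsLipJet Ω f G H γ) (hf : EqOn f' f Ω)
    (hG : EqOn G' G Ω) : IsLipJet Ω f' G' H γ where
  nonneg := hJ.nonneg
  norm_le u hu := by rw [hf hu]; exact hJ.norm_le u hu
  norm_deriv_le u hu := by rw [hG hu]; exact hJ.norm_deriv_le u hu
  norm_deriv_sub_le u hu v hv := by rw [hG hu, hG hv]; exact hJ.norm_deriv_sub_le u hu v hv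
  norm_remainder_le u hu v hv := by
    rw [hf hu, hf hv, hG hv]; exact hJ.norm_remainder_le u hu v hv

theorem zero (Ω : Set X) (hH : 0 ≤ H) : IsLipJet Ω (0 : X → V) 0 H γ where
  nonneg := hH
  norm_le u _ := by rwa [Pi.zero_apply, norm_zero]
  norm_deriv_le u _ := by rwa [Pi.zero_apply, norm_zero]
  norm_deriv_sub_le u _ v _ := by
    rw [Pi.zero_apply, Pi.zero_apply, sub_self, norm_zero]
    positivity
  norm_remainder_le u _ v _ := by
    rw [Pi.zero_apply, Pi.zero_apply, Pi.zero_apply, zero_apply, sub_self, sub_self, norm_zero]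
    positivity

theorem of_norm_sub_lt_one (hH : 0 ≤ H) (hγ0 : 0 ≤ γ) (hf : ∀ u ∈ Ω, ‖f u‖ ≤ H)
    (hG : ∀ u ∈ Ω, ‖G u‖ ≤ H)
    (hGsub : ∀ u ∈ Ω, ∀ v ∈ Ω, ‖u - v‖ < 1 → ‖G u - G v‖ ≤ H * ‖u - v‖ ^ γ)
    (hrem : ∀ u ∈ Ω, ∀ v ∈ Ω, ‖u - v‖ < 1 → ‖f u - f v - G v (u - v)‖ ≤ H * ‖u - v‖ ^ (1 + γ)) :
    IsLipJet Ω f G (3 * H) γ := by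
  have hH3 : H ≤ 3 * H := by linarith
  refine ⟨by positivity, fun u hu => (hf u hu).trans hH3, fun u hu => (hG u hu).trans hH3,
    fun u hu v hv => ?_, fun u hu v hv => ?_⟩
  all_goals rcases lt_or_ge ‖u - v‖ 1 with huv | huv
  · exact (hGsub u hu v hv huv).trans (by gcongr)
  · calc ‖G u - G v‖ ≤ H + H := norm_sub_le_of_le (hG u hu) (hG v hv)
      _ ≤ 3 * H * 1 := by linarith
      _ ≤ 3 * H * ‖u - v‖ ^ γ := by gcongr; exact Real.one_le_rpow huv hγ0
  · exact (hrem u hu v hv huv).trans (by gcongr)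
  · calc ‖f u - f v - G v (u - v)‖ ≤ H + H + H * ‖u - v‖ :=
          norm_sub_le_of_le (norm_sub_le_of_le (hf u hu) (hf v hv))
            ((G v).le_of_opNorm_le (hG v hv) _)
      _ ≤ 3 * H * (‖u - v‖ * 1) := by nlinarith
      _ ≤ 3 * H * (‖u - v‖ * ‖u - v‖ ^ γ) := by gcongr; exact Real.one_le_rpow huv hγ0
      _ = 3 * H * ‖u - v‖ ^ (1 + γ) := by
          rw [Real.rpow_one_add' (norm_nonneg _) (by positivity)]

theorem union {Ω' : Set X} (hJ : IsLipJet Ω f G H γ) (hJ' : IsLipJet Ω' f G H γ) (hγ0 : 0 ≤ γ)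
    (hsep : ∀ u ∈ Ω, ∀ v ∈ Ω', 1 ≤ ‖u - v‖) : IsLipJet (Ω ∪ Ω') f G (3 * H) γ := by
  have hclose (u) (hu : u ∈ Ω ∪ Ω') (v) (hv : v ∈ Ω ∪ Ω') (huv : ‖u - v‖ < 1) :
      u ∈ Ω ∧ v ∈ Ω ∨ u ∈ Ω' ∧ v ∈ Ω' := by
    rcases hu with hu | hu <;> rcases hv with hv | hv
    · exact .inl ⟨hu, hv⟩
    · exact absurd huv (hsep u hu v hv).not_gt
    · exact absurd huv ((hsep v hv u hu).trans_eq (norm_sub_rev v u)).not_gt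
    · exact .inr ⟨hu, hv⟩
  refine of_norm_sub_lt_one hJ.nonneg hγ0 (fun u hu => hu.elim (hJ.norm_le u) (hJ'.norm_le u))
    (fun u hu => hu.elim (hJ.norm_deriv_le u) (hJ'.norm_deriv_le u))
    (fun u hu v hv huv => ?_) (fun u hu v hv huv => ?_)
  all_goals obtain ⟨hu, hv⟩ | ⟨hu, hv⟩ := hclose u hu v hv huv
  exacts [hJ.norm_deriv_sub_le u hu v hv, hJ'.norm_deriv_sub_le u hu v hv,
    hJ.norm_remainder_le u hu v hv, hJ'.norm_remainder_le u hu v hv]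

theorem indicator_union_compl_thickening (hJ : IsLipJet Ω f G H γ) (hγ0 : 0 ≤ γ) :
    IsLipJet (Ω ∪ (thickening 1 Ω)ᶜ) (Ω.indicator f) (Ω.indicator G) (3 * H) γ := by
  have hdisj : Disjoint Ω (thickening 1 Ω)ᶜ :=
    disjoint_compl_right_iff_subset.2 (self_subset_thickening one_pos Ω)
  refine (hJ.congr eqOn_indicator eqOn_indicator).union
    ((IsLipJet.zero _ hJ.nonneg).congr (fun u hu => ?_) (fun u hu => ?_)) hγ0
    (fun u hu v hv => ?_)
  · exact indicator_of_notMem (disjoint_right.1 hdisj hu) f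
  · exact indicator_of_notMem (disjoint_right.1 hdisj hu) G
  · by_contra! huv
    exact hv (mem_thickening_iff.2 ⟨u, hu, by rwa [dist_comm, dist_eq_norm]⟩)

end IsLipJet

theorem infDist_union_compl_thickening_le {X : Type*} [PseudoMetricSpace X] {r : ℝ} (hr : 0 ≤ r)
    (Ω : Set X) (x : X) : infDist x (Ω ∪ (thickening r Ω)ᶜ) ≤ r := by
  by_cases hx : x ∈ thickening r Ω
  · obtain ⟨u, hu, hxu⟩ := mem_thickening_iff.1 hx
    exact (infDist_le_dist_of_mem (mem_union_left _ hu)).trans hxu.le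
  · exact (infDist_zero_of_mem (mem_union_right _ hx)).trans_le hr

end LipJet

section NearestPoint

variable {X : Type*} [SeminormedAddCommGroup X] {Ω : Set X} {x p u : X}

/-- `p` is a point of `Ω` at minimal distance from `x`. -/
structure IsNearestPoint (Ω : Set X) (x p : X) : Prop where
  mem : p ∈ Ω
  norm_sub_eq : ‖x - p‖ = infDist x Ω

theorem exists_isNearestPoint [ProperSpace X] (hΩ : IsClosed Ω) (hne : Ω.Nonempty) (x : X) :
    ∃ p, IsNearestPoint Ω x p := by
  obtain ⟨p, hp, hxp⟩ := hΩ.exists_infDist_eq_dist hne x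
  exact ⟨p, hp, by rw [hxp, dist_eq_norm]⟩

theorem IsNearestPoint.norm_sub_le (hp : IsNearestPoint Ω x p) (hu : u ∈ Ω) :
    ‖x - p‖ ≤ ‖x - u‖ := by
  rw [hp.norm_sub_eq, ← dist_eq_norm]
  exact infDist_le_dist_of_mem hu

theorem IsNearestPoint.norm_sub_le_two_mul (hp : IsNearestPoint Ω x p) (hu : u ∈ Ω) :
    ‖p - u‖ ≤ 2 * ‖x - u‖ := by
  calc ‖p - u‖ = ‖(x - u) - (x - p)‖ := by rw [sub_sub_sub_cancel_left]
    _ ≤ ‖x - u‖ + ‖x - u‖ := norm_sub_le_of_le le_rfl (hp.norm_sub_le hu)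
    _ = 2 * ‖x - u‖ := (two_mul _).symm

end NearestPoint

theorem IsNearestPoint.eq_of_mem {X : Type*} [NormedAddCommGroup X] {Ω : Set X} {x p : X}
    (hp : IsNearestPoint Ω x p) (hx : x ∈ Ω) : p = x := by
  have := hp.norm_sub_eq
  rw [infDist_zero_of_mem hx, norm_sub_eq_zero_iff] at this
  exact this.symm

theorem IsNearestPoint.infDist_pos {X : Type*} [NormedAddCommGroup X] {Ω : Set X} {x p : X}
    (hp : IsNearestPoint Ω x p) (hx : x ∉ Ω) : 0 < infDist x Ω := by
  rw [← hp.norm_sub_eq, norm_sub_pos_iff]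
  rintro rfl
  exact hx hp.mem

theorem IsNearestPoint.mem_ball_self {X : Type*} [NormedAddCommGroup X] {Ω : Set X} {x p : X}
    (hp : IsNearestPoint Ω x p) (hx : x ∉ Ω) : x ∈ ball x (infDist x Ω / 8) :=
  Metric.mem_ball_self (div_pos (hp.infDist_pos hx) (by norm_num))

section WhitneyExtension

variable {X V : Type*} [NormedAddCommGroup X] [NormedSpace ℝ X]
  [NormedAddCommGroup V] [NormedSpace ℝ V]

/-- `F` extends `f` from `Ω`, and near each point off `Ω`, at distance `δ`, it differs from the
Taylor polynomial at a nearest point of `Ω` by a function of size `B * δ ^ (1 + γ)` at scale `δ`. -/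
structure IsWhitneyExtension (Ω : Set X) (f : X → V) (G : X → X →L[ℝ] V) (F : X → V)
    (B γ : ℝ) : Prop where
  nonneg : 0 ≤ B
  eqOn : EqOn F f Ω
  scaledC11On : ∀ x₀ ∉ Ω, ∀ p, IsNearestPoint Ω x₀ p →
    ScaledC11On (ball x₀ (infDist x₀ Ω / 8)) (fun x => F x - taylorAt f G p x)
      (B * infDist x₀ Ω ^ (1 + γ)) (infDist x₀ Ω)

open Classical in
/-- Whitney's extension of the jet `(f, G)`: off `Ω`, the average with the weights `φ b` of the
Taylor polynomials at the points `π b`, meant to be nearest to `b` in `Ω`. -/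
def whitneyExtension (Ω : Set X) (φ : X → X → ℝ) (π : X → X) (f : X → V) (G : X → X →L[ℝ] V)
    (x : X) : V :=
  if x ∈ Ω then f x else ∑ᶠ b, φ b x • taylorAt f G (π b) x

variable {Ω : Set X} {f F : X → V} {G : X → X →L[ℝ] V} {B H K γ : ℝ} {φ : X → X → ℝ} {π : X → X}
  {I : Finset X} {x₀ x y p u : X}

theorem whitneyExtension_sub_taylorAt
    (hφ : IsLocalWhitneyPartition φ I x₀ (infDist x₀ Ω) K)
    (hx : x ∈ ball x₀ (infDist x₀ Ω / 8)) :
    whitneyExtension Ω φ π f G x - taylorAt f G p x =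
      ∑ b ∈ I, φ b x • (taylorAt f G (π b) x - taylorAt f G p x) := by
  have hxΩ : x ∉ Ω := disjoint_left.1 disjoint_ball_infDist
    (ball_subset_ball (div_le_self infDist_nonneg (by norm_num)) hx)
  have hsupp : support (fun b => φ b x • taylorAt f G (π b) x) ⊆ I := fun b hb => by
    by_contra hbI
    exact hb (by simp only [hφ.eq_zero b hbI x hx, zero_smul])
  simp only [smul_sub]
  rw [Finset.sum_sub_distrib, ← Finset.sum_smul, hφ.sum_eq_one x hx, one_smul, whitneyExtension,
    if_neg hxΩ, finsum_eq_sum_of_support_subset _ hsupp]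

theorem scaledC11On_whitneyExtension_sub_taylorAt (hJ : IsLipJet Ω f G H γ) (hγ0 : 0 ≤ γ)
    (hγ1 : γ ≤ 1) (hπ : ∀ b, IsNearestPoint Ω b (π b)) (hx₀ : x₀ ∉ Ω)
    (hp : IsNearestPoint Ω x₀ p) (hφ : IsLocalWhitneyPartition φ I x₀ (infDist x₀ Ω) K) :
    ScaledC11On (ball x₀ (infDist x₀ Ω / 8))
      (fun x => whitneyExtension Ω φ π f G x - taylorAt f G p x)
      (I.card * (4 * (K * (2 * 6 ^ 2 * (H * infDist x₀ Ω ^ (1 + γ)))))) (infDist x₀ Ω) := by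
  have hδ := hp.infDist_pos hx₀
  refine (ScaledC11On.sum fun b hb => (hφ.scaledC11On b hb).smul (hJ.scaledC11On_taylorAt_sub hγ0
    hγ1 hp.mem (hπ b).mem (by norm_num) hδ ?_ fun x hx => ?_) (convex_ball _ _) hδ).congr
    isOpen_ball fun x => whitneyExtension_sub_taylorAt hφ
  all_goals
    have hbx₀ := hφ.dist_le b hb
    have hbπ : dist b (π b) ≤ 3 * infDist x₀ Ω := by
      rw [dist_eq_norm, (hπ b).norm_sub_eq]
      linarith [infDist_le_infDist_add_dist (s := Ω) (x := b) (y := x₀)]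
    rw [← dist_eq_norm]
  · have hx₀p : dist x₀ p = infDist x₀ Ω := (dist_eq_norm _ _).trans hp.norm_sub_eq
    linarith [dist_triangle4 (π b) b x₀ p, dist_comm b (π b)]
  · linarith [dist_triangle4 x x₀ b (π b), dist_comm b x₀, mem_ball.1 hx]

theorem exists_isWhitneyExtension (X : Type*) [NormedAddCommGroup X] [NormedSpace ℝ X]
    [FiniteDimensional ℝ X] :
    ∃ A : ℝ, 0 ≤ A ∧ ∀ {V : Type*} [NormedAddCommGroup V] [NormedSpace ℝ V] {Ω : Set X}
      {f : X → V} {G : X → X →L[ℝ] V} {H γ : ℝ}, 0 ≤ γ → γ ≤ 1 → IsClosed Ω → Ω.Nonempty →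
      IsLipJet Ω f G H γ → ∃ F, IsWhitneyExtension Ω f G F (A * H) γ := by
  have : ProperSpace X := FiniteDimensional.proper ℝ X
  obtain ⟨N, K, hK, hpart⟩ := exists_whitneyPartition X
  refine ⟨N * (4 * (K * (2 * 6 ^ 2))), by positivity,
    fun {V} _ _ Ω f G H γ hγ0 hγ1 hΩ hne hJ => ?_⟩
  have := hJ.nonneg
  obtain ⟨φ, hφ⟩ := hpart Ω hΩ hne
  choose π hπ using exists_isNearestPoint hΩ hne
  refine ⟨whitneyExtension Ω φ π f G, by positivity, fun x hx => if_pos hx,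
    fun x₀ hx₀ p hp => ?_⟩
  obtain ⟨I, hIN, hI⟩ := hφ x₀ hx₀
  refine (scaledC11On_whitneyExtension_sub_taylorAt hJ hγ0 hγ1 hπ hx₀ hp hI).mono subset_rfl
    infDist_nonneg ?_
  calc _ ≤ N * (4 * (K * (2 * 6 ^ 2 * (H * infDist x₀ Ω ^ (1 + γ))))) := by
        have : 0 ≤ infDist x₀ Ω := infDist_nonneg
        gcongr
    _ = _ := by ring

namespace IsWhitneyExtension

theorem hasFDerivAt_of_mem_ball (hF : IsWhitneyExtension Ω f G F B γ) (hx₀ : x₀ ∉ Ω)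
    (hp : IsNearestPoint Ω x₀ p) (hx : x ∈ ball x₀ (infDist x₀ Ω / 8)) :
    HasFDerivAt F (fderiv ℝ (fun y => F y - taylorAt f G p y) x + G p) x := by
  have h := ((hF.scaledC11On x₀ hx₀ p hp).hasFDerivAt hx).fun_add (hasFDerivAt_taylorAt f G p x)
  simpa only [sub_add_cancel] using h

theorem norm_sub_taylorAt_nearest_le (hF : IsWhitneyExtension Ω f G F B γ)
    (hp : IsNearestPoint Ω x p) :
    ‖F x - taylorAt f G p x‖ ≤ B * ‖x - p‖ ^ (1 + γ) := by
  by_cases hx : x ∈ Ω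
  · have := hF.nonneg
    rw [hp.eq_of_mem hx, sub_taylorAt, hF.eqOn hx, sub_self, sub_self, map_zero,
      sub_zero, norm_zero]
    positivity
  · rw [hp.norm_sub_eq]
    exact (hF.scaledC11On x hx p hp).norm_le x (hp.mem_ball_self hx)

theorem norm_sub_taylorAt_le (hF : IsWhitneyExtension Ω f G F B γ) (hJ : IsLipJet Ω f G H γ)
    (hγ0 : 0 ≤ γ) (hγ1 : γ ≤ 1) (hΩ : ∀ x, ∃ p, IsNearestPoint Ω x p) (hu : u ∈ Ω) (x : X) :
    ‖F x - taylorAt f G u x‖ ≤ (B + 8 * H) * ‖x - u‖ ^ (1 + γ) := by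
  have := hF.nonneg
  obtain ⟨p, hp⟩ := hΩ x
  have hxp := hp.norm_sub_le hu
  have hTaylor := hJ.norm_taylorAt_sub_le hγ0 hγ1 hu hp.mem one_le_two (norm_nonneg (x - u))
    (hp.norm_sub_le_two_mul hu) (hxp.trans (le_mul_of_one_le_left (norm_nonneg _) one_le_two))
  calc _ ≤ ‖F x - taylorAt f G p x‖ + ‖taylorAt f G p x - taylorAt f G u x‖ :=
        norm_sub_le_norm_sub_add_norm_sub _ _ _
    _ ≤ B * ‖x - u‖ ^ (1 + γ) + 2 * 2 ^ 2 * (H * ‖x - u‖ ^ (1 + γ)) :=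
        add_le_add ((hF.norm_sub_taylorAt_nearest_le hp).trans (by gcongr)) hTaylor
    _ = (B + 8 * H) * ‖x - u‖ ^ (1 + γ) := by ring

theorem hasFDerivAt_of_mem (hF : IsWhitneyExtension Ω f G F B γ) (hJ : IsLipJet Ω f G H γ)
    (hγ0 : 0 < γ) (hγ1 : γ ≤ 1) (hΩ : ∀ x, ∃ p, IsNearestPoint Ω x p) (hu : u ∈ Ω) :
    HasFDerivAt F (G u) u := by
  refine .of_isLittleO (IsBigO.trans_isLittleO
    (.of_bound (B + 8 * H) (.of_forall fun x => ?_)) (isLittleO_rpow_norm_sub_sub hγ0 u))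
  rw [hF.eqOn hu, ← sub_taylorAt, Real.norm_of_nonneg (by positivity)]
  exact hF.norm_sub_taylorAt_le hJ hγ0.le hγ1 hΩ hu x

theorem differentiable (hF : IsWhitneyExtension Ω f G F B γ) (hJ : IsLipJet Ω f G H γ)
    (hγ0 : 0 < γ) (hγ1 : γ ≤ 1) (hΩ : ∀ x, ∃ p, IsNearestPoint Ω x p) : Differentiable ℝ F := by
  intro x
  by_cases hx : x ∈ Ω
  · exact (hF.hasFDerivAt_of_mem hJ hγ0 hγ1 hΩ hx).differentiableAt
  · obtain ⟨p, hp⟩ := hΩ x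
    exact (hF.hasFDerivAt_of_mem_ball hx hp (hp.mem_ball_self hx)).differentiableAt

theorem norm_fderiv_sub_nearest_le (hF : IsWhitneyExtension Ω f G F B γ)
    (hJ : IsLipJet Ω f G H γ) (hγ0 : 0 < γ) (hγ1 : γ ≤ 1)
    (hΩ : ∀ x, ∃ p, IsNearestPoint Ω x p) (hp : IsNearestPoint Ω x p) :
    ‖fderiv ℝ F x - G p‖ ≤ B * ‖x - p‖ ^ γ := by
  by_cases hx : x ∈ Ω
  · have := hF.nonneg
    rw [hp.eq_of_mem hx, (hF.hasFDerivAt_of_mem hJ hγ0 hγ1 hΩ hx).fderiv, sub_self, norm_zero]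
    positivity
  · have hδ := hp.infDist_pos hx
    have hxx := hp.mem_ball_self hx
    rw [(hF.hasFDerivAt_of_mem_ball hx hp hxx).fderiv, add_sub_cancel_right, hp.norm_sub_eq]
    refine ((hF.scaledC11On x hx p hp).norm_fderiv_le x hxx).trans_eq ?_
    rw [Real.rpow_one_add' hδ.le (by positivity)]
    field_simp

theorem norm_fderiv_sub_le (hF : IsWhitneyExtension Ω f G F B γ) (hJ : IsLipJet Ω f G H γ)
    (hγ0 : 0 < γ) (hγ1 : γ ≤ 1) (hΩ : ∀ x, ∃ p, IsNearestPoint Ω x p) (hu : u ∈ Ω) (x : X) :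
    ‖fderiv ℝ F x - G u‖ ≤ (B + 2 * H) * ‖x - u‖ ^ γ := by
  have := hF.nonneg
  obtain ⟨p, hp⟩ := hΩ x
  have hxp := hp.norm_sub_le hu
  calc _ ≤ ‖fderiv ℝ F x - G p‖ + ‖G p - G u‖ := norm_sub_le_norm_sub_add_norm_sub _ _ _
    _ ≤ B * ‖x - u‖ ^ γ + 2 * (H * ‖x - u‖ ^ γ) :=
        add_le_add ((hF.norm_fderiv_sub_nearest_le hJ hγ0 hγ1 hΩ hp).trans (by gcongr))
          (hJ.norm_deriv_sub_le_mul hγ0.le hγ1 hu hp.mem one_le_two (norm_nonneg _)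
            (hp.norm_sub_le_two_mul hu))
    _ = (B + 2 * H) * ‖x - u‖ ^ γ := by ring

theorem norm_le (hF : IsWhitneyExtension Ω f G F B γ) (hJ : IsLipJet Ω f G H γ) (hγ0 : 0 ≤ γ)
    (hΩ : ∀ x, ∃ p, IsNearestPoint Ω x p) (hx : infDist x Ω ≤ 1) : ‖F x‖ ≤ B + 2 * H := by
  obtain ⟨p, hp⟩ := hΩ x
  have hxp : ‖x - p‖ ≤ 1 := hp.norm_sub_eq.trans_le hx
  have hrem : ‖F x - taylorAt f G p x‖ ≤ B :=
    (hF.norm_sub_taylorAt_nearest_le hp).trans (mul_le_of_le_one_right hF.nonneg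
      (Real.rpow_le_one (norm_nonneg _) hxp (by positivity)))
  have hTaylor : ‖taylorAt f G p x‖ ≤ H + H * 1 :=
    norm_add_le_of_le (hJ.norm_le p hp.mem)
      ((G p).le_of_opNorm_le_of_le (hJ.norm_deriv_le p hp.mem) hxp)
  calc ‖F x‖ = ‖F x - taylorAt f G p x + taylorAt f G p x‖ := by rw [sub_add_cancel]
    _ ≤ B + (H + H * 1) := norm_add_le_of_le hrem hTaylor
    _ = B + 2 * H := by ring

theorem norm_fderiv_le (hF : IsWhitneyExtension Ω f G F B γ) (hJ : IsLipJet Ω f G H γ)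
    (hγ0 : 0 < γ) (hγ1 : γ ≤ 1) (hΩ : ∀ x, ∃ p, IsNearestPoint Ω x p)
    (hx : infDist x Ω ≤ 1) : ‖fderiv ℝ F x‖ ≤ B + H := by
  obtain ⟨p, hp⟩ := hΩ x
  have hxp : ‖x - p‖ ≤ 1 := hp.norm_sub_eq.trans_le hx
  have hrem : ‖fderiv ℝ F x - G p‖ ≤ B :=
    (hF.norm_fderiv_sub_nearest_le hJ hγ0 hγ1 hΩ hp).trans (mul_le_of_le_one_right hF.nonneg
      (Real.rpow_le_one (norm_nonneg _) hxp hγ0.le))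
  calc ‖fderiv ℝ F x‖ = ‖fderiv ℝ F x - G p + G p‖ := by rw [sub_add_cancel]
    _ ≤ B + H := norm_add_le_of_le hrem (hJ.norm_deriv_le p hp.mem)

theorem norm_fderiv_sub_fderiv_le_of_near (hF : IsWhitneyExtension Ω f G F B γ) (hγ1 : γ ≤ 1)
    (hx : x ∉ Ω) (hp : IsNearestPoint Ω x p) (hxy : ‖x - y‖ < infDist x Ω / 8) :
    ‖fderiv ℝ F x - fderiv ℝ F y‖ ≤ B * ‖x - y‖ ^ γ := by
  have := hF.nonneg
  have hδ := hp.infDist_pos hx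
  have hxx := hp.mem_ball_self hx
  have hyx : y ∈ ball x (infDist x Ω / 8) := mem_ball_iff_norm'.2 hxy
  rw [(hF.hasFDerivAt_of_mem_ball hx hp hxx).fderiv, (hF.hasFDerivAt_of_mem_ball hx hp hyx).fderiv,
    add_sub_add_right_eq_sub]
  calc _ ≤ B * infDist x Ω ^ (1 + γ) / infDist x Ω ^ 2 * ‖x - y‖ :=
        (hF.scaledC11On x hx p hp).norm_fderiv_sub_le x hxx y hyx
    _ = B * (infDist x Ω ^ (1 + γ) / infDist x Ω ^ 2 * ‖x - y‖) := by ring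
    _ ≤ B * ‖x - y‖ ^ γ := by
        gcongr
        exact rpow_one_add_div_sq_mul_le hδ (norm_nonneg _) (by linarith) hγ1

theorem norm_fderiv_sub_fderiv_le_of_far (hF : IsWhitneyExtension Ω f G F B γ)
    (hJ : IsLipJet Ω f G H γ) (hγ0 : 0 < γ) (hγ1 : γ ≤ 1)
    (hΩ : ∀ x, ∃ p, IsNearestPoint Ω x p) (hxy : infDist x Ω ≤ 8 * ‖x - y‖) :
    ‖fderiv ℝ F x - fderiv ℝ F y‖ ≤ 17 * (B + 2 * H) * ‖x - y‖ ^ γ := by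
  have hB := hF.nonneg
  have hH := hJ.nonneg
  obtain ⟨p, hp⟩ := hΩ x
  have hxp : ‖x - p‖ ≤ 8 * ‖x - y‖ := hp.norm_sub_eq.trans_le hxy
  have hyp : ‖y - p‖ ≤ 9 * ‖x - y‖ := by
    calc ‖y - p‖ ≤ ‖y - x‖ + ‖x - p‖ := norm_sub_le_norm_sub_add_norm_sub _ _ _
      _ ≤ 9 * ‖x - y‖ := by rw [norm_sub_rev]; linarith
  have hnear {z : X} {k : ℝ} (hk : 1 ≤ k) (hz : ‖z - p‖ ≤ k * ‖x - y‖) :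
      ‖fderiv ℝ F z - G p‖ ≤ (B + 2 * H) * (k * ‖x - y‖ ^ γ) := by
    calc _ ≤ (B + 2 * H) * ‖z - p‖ ^ γ := hF.norm_fderiv_sub_le hJ hγ0 hγ1 hΩ hp.mem z
      _ ≤ (B + 2 * H) * (k * ‖x - y‖) ^ γ := by gcongr
      _ ≤ (B + 2 * H) * (k * ‖x - y‖ ^ γ) := by
          gcongr; exact mul_rpow_le_mul_rpow hk (norm_nonneg _) hγ1
  calc _ = ‖(fderiv ℝ F x - G p) - (fderiv ℝ F y - G p)‖ := by rw [sub_sub_sub_cancel_right]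
    _ ≤ (B + 2 * H) * (8 * ‖x - y‖ ^ γ) + (B + 2 * H) * (9 * ‖x - y‖ ^ γ) :=
        norm_sub_le_of_le (hnear (by norm_num) hxp) (hnear (by norm_num) hyp)
    _ = 17 * (B + 2 * H) * ‖x - y‖ ^ γ := by ring

theorem norm_fderiv_sub_fderiv_le (hF : IsWhitneyExtension Ω f G F B γ)
    (hJ : IsLipJet Ω f G H γ) (hγ0 : 0 < γ) (hγ1 : γ ≤ 1)
    (hΩ : ∀ x, ∃ p, IsNearestPoint Ω x p) (x y : X) :
    ‖fderiv ℝ F x - fderiv ℝ F y‖ ≤ 17 * (B + 2 * H) * ‖x - y‖ ^ γ := by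
  rcases le_or_gt (infDist x Ω) (8 * ‖x - y‖) with hxy | hxy
  · exact hF.norm_fderiv_sub_fderiv_le_of_far hJ hγ0 hγ1 hΩ hxy
  have hB := hF.nonneg
  have hH := hJ.nonneg
  have hx : x ∉ Ω := fun hx => by
    rw [infDist_zero_of_mem hx] at hxy
    exact hxy.not_ge (by positivity)
  obtain ⟨p, hp⟩ := hΩ x
  refine (hF.norm_fderiv_sub_fderiv_le_of_near hγ1 hx hp (by linarith)).trans ?_
  gcongr
  linarith

end IsWhitneyExtension

theorem whitney_extension_lip_one_plus_gamma_general (X : Type*) [NormedAddCommGroup X]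
    [NormedSpace ℝ X] [FiniteDimensional ℝ X] :
    ∃ c : ℝ, 0 < c ∧ ∀ {V : Type*} [NormedAddCommGroup V] [NormedSpace ℝ V] {Ω : Set X}
      {f : X → V} {G : X → X →L[ℝ] V} {H γ : ℝ}, 0 < γ → γ ≤ 1 → IsClosed Ω →
      IsLipJet Ω f G H γ →
      ∃ F : X → V, Differentiable ℝ F ∧ (∀ u ∈ Ω, F u = f u ∧ fderiv ℝ F u = G u) ∧
        (∀ u, ‖F u‖ ≤ c * H) ∧ (∀ u, ‖fderiv ℝ F u‖ ≤ c * H) ∧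
        ∀ u v, ‖fderiv ℝ F u - fderiv ℝ F v‖ ≤ c * H * ‖u - v‖ ^ γ := by
  have : ProperSpace X := FiniteDimensional.proper ℝ X
  obtain ⟨A, hA, hext⟩ := exists_isWhitneyExtension X
  refine ⟨17 * (A + 2) * 3, by positivity, fun {V} _ _ Ω f G H γ hγ0 hγ1 hΩ hJ => ?_⟩
  have hH := hJ.nonneg
  have hAH : 0 ≤ A * H := by positivity
  have hJ' := hJ.indicator_union_compl_thickening hγ0.le
  have hdist := infDist_union_compl_thickening_le zero_le_one Ω
  set Ω' := Ω ∪ (thickening 1 Ω)ᶜ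
  have hne : Ω'.Nonempty := by
    rcases Ω.eq_empty_or_nonempty with rfl | hne
    · exact ⟨0, .inr (by rw [thickening_empty]; exact notMem_empty 0)⟩
    · exact hne.inl
  have hclosed : IsClosed Ω' := hΩ.union isOpen_thickening.isClosed_compl
  have hnear := exists_isNearestPoint hclosed hne
  obtain ⟨F, hF⟩ := hext hγ0.le hγ1 hclosed hne hJ'
  refine ⟨F, hF.differentiable hJ' hγ0 hγ1 hnear, fun u hu => ⟨?_, ?_⟩, fun x => ?_, fun x => ?_,
    fun x y => ?_⟩
  · rw [hF.eqOn (mem_union_left _ hu), indicator_of_mem hu]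
  · rw [(hF.hasFDerivAt_of_mem hJ' hγ0 hγ1 hnear (mem_union_left _ hu)).fderiv, indicator_of_mem hu]
  · exact (hF.norm_le hJ' hγ0.le hnear (hdist x)).trans (by linarith)
  · exact (hF.norm_fderiv_le hJ' hγ0 hγ1 hnear (hdist x)).trans (by linarith)
  · exact (hF.norm_fderiv_sub_fderiv_le hJ' hγ0 hγ1 hnear x y).trans_eq (by ring)

end WhitneyExtension

/-- Whitney extension theorem, `Lip(1+γ)` case: a bounded
`Lip(1+γ)` pair `(f, G)` on a closed set `Ω ⊆ ℝ^n` extends to a differentiable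
function `F` on all of `ℝ^n` with `F = f`, `DF = G` on `Ω`, with `F`, `DF` bounded
by `cH` and `DF` globally `γ`-Hölder with constant `cH`, where `c = c(γ, n)`. -/
theorem whitney_extension_lip_one_plus_gamma (n : ℕ) (γ : ℝ)
    (hγ0 : 0 < γ) (hγ1 : γ ≤ 1) :
    ∃ c : ℝ, 0 < c ∧
      ∀ (d' : ℕ) (Ω : Set (E n)) (f : E n → E d') (G : E n → (E n →L[ℝ] E d')) (H : ℝ),
        IsClosed Ω → 0 ≤ H →
        (∀ u ∈ Ω, ‖f u‖ ≤ H) →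
        (∀ u ∈ Ω, ‖G u‖ ≤ H) →
        (∀ u ∈ Ω, ∀ u' ∈ Ω, ‖G u - G u'‖ ≤ H * ‖u - u'‖ ^ γ) →
        (∀ u ∈ Ω, ∀ u' ∈ Ω, ‖f u - f u' - G u' (u - u')‖ ≤ H * ‖u - u'‖ ^ (1 + γ)) →
        ∃ F : E n → E d', Differentiable ℝ F ∧
          (∀ u ∈ Ω, F u = f u ∧ fderiv ℝ F u = G u) ∧
          (∀ u, ‖F u‖ ≤ c * H) ∧
          (∀ u, ‖fderiv ℝ F u‖ ≤ c * H) ∧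
          (∀ u u', ‖fderiv ℝ F u - fderiv ℝ F u'‖ ≤ c * H * ‖u - u'‖ ^ γ) := by
  obtain ⟨c, hc, h⟩ := whitney_extension_lip_one_plus_gamma_general (E n)
  exact ⟨c, hc, fun d' Ω f G H hΩ hH hf hG hGsub hrem =>
    h hγ0 hγ1 hΩ ⟨hH, hf, hG, hGsub, hrem⟩⟩
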